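/- Assume the feature vectors {φ(y)}_{y∈Y} are orthonormal and the ground truth reward r_G satisfies the reward structure assumption. Suppose θ_t evolves by gradient flow maximizing V_G. Then at any time t ≥ 0 such that V_G(θ_t) < r_G(y_med), it holds that d/dt π_{θ_t}(Y_bad) < 0. -/

import Mathlib

open scoped BigOperators RealInnerProductSpace

noncomputable def policy {Y : Type*} [Fintype Y] {D : ℕ}
    (φ : Y → EuclideanSpace ℝ (Fin D)) (θ : EuclideanSpace ℝ (Fin D)) (y : Y) : ℝ :=
  Real.exp ⟪φ y, θ⟫ / ∑ z, Real.exp ⟪φ z, θ⟫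

noncomputable def expReward {Y : Type*} [Fintype Y] {D : ℕ}
    (φ : Y → EuclideanSpace ℝ (Fin D)) (r : Y → ℝ) (θ : EuclideanSpace ℝ (Fin D)) : ℝ :=
  ∑ y, policy φ θ y * r y

/-!
The probability of a set `B` is the expected reward of its indicator, and the gradient of an
expected reward is `∑ y, π(y) (r y - V_r) φ(y)`. For orthogonal features, gradient flow on `V_r`
therefore changes `π(B)` at the rate `∑ y, ‖φ(y)‖² π(y)² (1_B(y) - π(B)) (r y - V_r)`. If `B` lies
on the low side of the current expected reward and its complement strictly on the high side, then
the two factors have opposite signs at every output: no term of the rate is positive, and the terms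
outside `B` are negative wherever the feature is nonzero.
-/

theorem inner_sum_smul_sum_smul_of_pairwise_inner_eq_zero {ι E : Type*} [Fintype ι]
    [NormedAddCommGroup E] [InnerProductSpace ℝ E] {v : ι → E}
    (hv : Pairwise fun i j => ⟪v i, v j⟫ = 0) (a b : ι → ℝ) :
    ⟪∑ i, a i • v i, ∑ i, b i • v i⟫ = ∑ i, ‖v i‖ ^ 2 * (a i * b i) := by
  rw [sum_inner]
  refine Finset.sum_congr rfl fun i _ => ?_
  rw [inner_sum, Finset.sum_eq_single i]
  · rw [real_inner_smul_left, real_inner_smul_right, real_inner_self_eq_norm_sq]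
    ring
  · intro j _ hji
    rw [real_inner_smul_left, real_inner_smul_right, hv hji.symm, mul_zero, mul_zero]
  · exact fun hi => absurd (Finset.mem_univ i) hi

theorem hasDerivAt_comp_of_hasGradientAt {E : Type*} [NormedAddCommGroup E] [InnerProductSpace ℝ E]
    [CompleteSpace E] {f : E → ℝ} {g : E} {γ : ℝ → E} {γ' : E} {t : ℝ}
    (hf : HasGradientAt f g (γ t)) (hγ : HasDerivAt γ γ' t) :
    HasDerivAt (fun τ => f (γ τ)) ⟪g, γ'⟫ t :=
  hf.hasFDerivAt.comp_hasDerivAt t hγ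

section Softmax

variable {Y : Type*} [Fintype Y] {D : ℕ} (φ : Y → EuclideanSpace ℝ (Fin D))
  (θ : EuclideanSpace ℝ (Fin D))

theorem sum_exp_inner_pos [Nonempty Y] : 0 < ∑ z, Real.exp ⟪φ z, θ⟫ :=
  Finset.sum_pos (fun _ _ => Real.exp_pos _) Finset.univ_nonempty

theorem policy_pos (y : Y) : 0 < policy φ θ y :=
  have : Nonempty Y := ⟨y⟩
  div_pos (Real.exp_pos _) (sum_exp_inner_pos φ θ)

theorem sum_policy [Nonempty Y] : ∑ y, policy φ θ y = 1 := by
  simp only [policy]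
  rw [← Finset.sum_div, div_self (sum_exp_inner_pos φ θ).ne']

theorem sum_policy_pos {B : Finset Y} (hB : B.Nonempty) : 0 < ∑ y ∈ B, policy φ θ y :=
  Finset.sum_pos (fun y _ => policy_pos φ θ y) hB

theorem sum_policy_lt_one {B : Finset Y} {y : Y} (hy : y ∉ B) : ∑ z ∈ B, policy φ θ z < 1 := by
  have : Nonempty Y := ⟨y⟩
  rw [← sum_policy φ θ]
  exact Finset.sum_lt_sum_of_subset B.subset_univ (Finset.mem_univ y) hy (policy_pos φ θ y)
    fun z _ _ => (policy_pos φ θ z).le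

theorem le_expReward [Nonempty Y] {r : Y → ℝ} {c : ℝ} (hc : ∀ y, c ≤ r y) :
    c ≤ expReward φ r θ :=
  calc
    c = ∑ y, policy φ θ y * c := by rw [← Finset.sum_mul, sum_policy, one_mul]
    _ ≤ expReward φ r θ :=
      Finset.sum_le_sum fun y _ => mul_le_mul_of_nonneg_left (hc y) (policy_pos φ θ y).le

theorem expReward_indicator_one (B : Finset Y) :
    expReward φ ((B : Set Y).indicator 1) θ = ∑ y ∈ B, policy φ θ y := by
  classical
  simp [expReward, Set.indicator_apply]

theorem policy_eq_exp_sub_log (y : Y) :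
    policy φ θ y = Real.exp (⟪φ y, θ⟫ - Real.log (∑ z, Real.exp ⟪φ z, θ⟫)) := by
  have : Nonempty Y := ⟨y⟩
  rw [Real.exp_sub, Real.exp_log (sum_exp_inner_pos φ θ), policy]

theorem hasFDerivAt_log_sum_exp_inner [Nonempty Y] :
    HasFDerivAt (fun θ => Real.log (∑ z, Real.exp ⟪φ z, θ⟫))
      (innerSL ℝ (∑ z, policy φ θ z • φ z)) θ := by
  have hexp (z : Y) : HasFDerivAt (fun θ => Real.exp ⟪φ z, θ⟫)
      (Real.exp ⟪φ z, θ⟫ • innerSL ℝ (φ z)) θ :=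
    (innerSL ℝ (φ z)).hasFDerivAt.exp
  refine ((HasFDerivAt.fun_sum fun z _ => hexp z).log (sum_exp_inner_pos φ θ).ne').congr_fderiv ?_
  simp only [policy, map_sum, map_smul, Finset.smul_sum, smul_smul, div_eq_inv_mul]

theorem hasFDerivAt_policy (y : Y) :
    HasFDerivAt (fun θ => policy φ θ y)
      (policy φ θ y • innerSL ℝ (φ y - ∑ z, policy φ θ z • φ z)) θ := by
  have : Nonempty Y := ⟨y⟩
  simp only [policy_eq_exp_sub_log φ _ y, map_sub]
  exact ((innerSL ℝ (φ y)).hasFDerivAt.sub (hasFDerivAt_log_sum_exp_inner φ θ)).exp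

theorem hasGradientAt_expReward (r : Y → ℝ) :
    HasGradientAt (expReward φ r)
      (∑ y, (policy φ θ y * (r y - expReward φ r θ)) • φ y) θ := by
  have hsum : HasFDerivAt (expReward φ r)
      (∑ y, r y • policy φ θ y • innerSL ℝ (φ y - ∑ z, policy φ θ z • φ z)) θ :=
    HasFDerivAt.fun_sum fun y _ => (hasFDerivAt_policy φ θ y).mul_const (r y)
  have hcenter : ∑ y, r y • policy φ θ y • (φ y - ∑ z, policy φ θ z • φ z) =
      ∑ y, (policy φ θ y * (r y - expReward φ r θ)) • φ y :=
    calc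
      _ = ∑ y, (policy φ θ y * r y) • φ y - expReward φ r θ • ∑ z, policy φ θ z • φ z := by
        simp only [expReward, Finset.sum_smul, smul_sub, Finset.sum_sub_distrib, smul_smul,
          mul_comm (r _)]
      _ = _ := by
        simp only [mul_sub, sub_smul, Finset.sum_sub_distrib, Finset.smul_sum, smul_smul,
          mul_comm (expReward φ r θ)]
  rw [hasGradientAt_iff_hasFDerivAt, ← hcenter]
  refine hsum.congr_fderiv ?_
  simp only [map_sum, map_smul]
  rfl

theorem inner_gradient_expReward {φ} (horth : Pairwise fun y z => ⟪φ y, φ z⟫ = 0) (s r : Y → ℝ) :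
    ⟪gradient (expReward φ s) θ, gradient (expReward φ r) θ⟫ =
      ∑ y, ‖φ y‖ ^ 2 * (policy φ θ y ^ 2 *
        ((s y - expReward φ s θ) * (r y - expReward φ r θ))) := by
  rw [(hasGradientAt_expReward φ θ s).gradient, (hasGradientAt_expReward φ θ r).gradient,
    inner_sum_smul_sum_smul_of_pairwise_inner_eq_zero horth]
  exact Finset.sum_congr rfl fun y _ => by ring

theorem inner_gradient_expReward_indicator_neg {φ}
    (horth : Pairwise fun y z => ⟪φ y, φ z⟫ = 0) {r : Y → ℝ} {B : Finset Y} (hB : B.Nonempty)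
    (hcompl : ∃ y ∉ B, φ y ≠ 0) (hlow : ∀ y ∈ B, r y ≤ expReward φ r θ)
    (hhigh : ∀ y ∉ B, expReward φ r θ < r y) :
    ⟪gradient (expReward φ ((B : Set Y).indicator 1)) θ, gradient (expReward φ r) θ⟫ < 0 := by
  obtain ⟨y₀, hy₀, hφy₀⟩ := hcompl
  have hweight (y : Y) : 0 < policy φ θ y ^ 2 := pow_pos (policy_pos φ θ y) 2
  have hin {y : Y} (hy : y ∈ B) :
      ((B : Set Y).indicator 1 y - ∑ z ∈ B, policy φ θ z) * (r y - expReward φ r θ) ≤ 0 := by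
    rw [Set.indicator_of_mem (Finset.mem_coe.2 hy), Pi.one_apply]
    exact mul_nonpos_of_nonneg_of_nonpos (sub_nonneg.2 (sum_policy_lt_one φ θ hy₀).le)
      (sub_nonpos.2 (hlow y hy))
  have hout {y : Y} (hy : y ∉ B) :
      ((B : Set Y).indicator 1 y - ∑ z ∈ B, policy φ θ z) * (r y - expReward φ r θ) < 0 := by
    rw [Set.indicator_of_notMem (Finset.mem_coe.not.2 hy), zero_sub]
    exact mul_neg_of_neg_of_pos (neg_neg_of_pos (sum_policy_pos φ θ hB)) (sub_pos.2 (hhigh y hy))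
  rw [inner_gradient_expReward θ horth, expReward_indicator_one]
  refine Finset.sum_neg' (fun y _ => ?_) ⟨y₀, Finset.mem_univ y₀, ?_⟩
  · refine mul_nonpos_of_nonneg_of_nonpos (sq_nonneg ‖φ y‖)
      (mul_nonpos_of_nonneg_of_nonpos (hweight y).le ?_)
    by_cases hy : y ∈ B
    exacts [hin hy, (hout hy).le]
  · exact mul_neg_of_pos_of_neg (pow_pos (norm_pos_iff.2 hφy₀) 2)
      (mul_neg_of_pos_of_neg (hweight y₀) (hout hy₀))

end Softmax

theorem bad_prob_decreasing_general {Y : Type*} [Fintype Y] {D : ℕ}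
    {φ : Y → EuclideanSpace ℝ (Fin D)}
    (horth : Pairwise fun y z => ⟪φ y, φ z⟫ = 0) {r : Y → ℝ} {B : Finset Y} (hB : B.Nonempty)
    (hcompl : ∃ y ∉ B, φ y ≠ 0) {θ : ℝ → EuclideanSpace ℝ (Fin D)} {t : ℝ}
    (hflow : HasDerivAt θ (gradient (expReward φ r) (θ t)) t)
    (hlow : ∀ y ∈ B, r y ≤ expReward φ r (θ t))
    (hhigh : ∀ y ∉ B, expReward φ r (θ t) < r y) :
    ∃ d : ℝ, HasDerivAt (fun τ : ℝ => ∑ y ∈ B, policy φ (θ τ) y) d t ∧ d < 0 := by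
  refine ⟨_, ?_, inner_gradient_expReward_indicator_neg (θ t) horth hB hcompl hlow hhigh⟩
  simp only [← expReward_indicator_one]
  exact hasDerivAt_comp_of_hasGradientAt
    (hasGradientAt_expReward φ (θ t) _).differentiableAt.hasGradientAt hflow

theorem bad_prob_decreasing {Y : Type*} [Fintype Y] {D : ℕ}
    (φ : Y → EuclideanSpace ℝ (Fin D)) (hφ : ∀ y, φ y ≠ 0)
    (horth : Orthonormal ℝ φ)
    (rG : Y → ℝ) (hrG : ∀ y, rG y ∈ Set.Icc (-1 : ℝ) 1)
    (ystar ymed ybad : Y) (Ybad : Finset Y) (hybad : ybad ∈ Ybad)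
    (hsm : ystar ≠ ymed) (hsb : ystar ∉ Ybad) (hmb : ymed ∉ Ybad)
    (hcover : ∀ y : Y, y = ystar ∨ y = ymed ∨ y ∈ Ybad)
    (hr1 : rG ymed < rG ystar) (hr2 : 0 < rG ymed)
    (hr3 : ∀ y ∈ Ybad, rG y ≤ 0)
    (hr4 : ∀ y ∈ Ybad, rG y = rG ybad)
    (Δ1 Δ2 : ℝ) (hΔ1 : Δ1 = rG ystar - rG ymed) (hΔ2 : Δ2 = rG ymed - rG ybad)
    (θt : ℝ → EuclideanSpace ℝ (Fin D))
    (hflow : ∀ t : ℝ, 0 ≤ t → HasDerivAt θt (gradient (expReward φ rG) (θt t)) t)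
    (t : ℝ) (ht : 0 ≤ t)
    (hV : expReward φ rG (θt t) < rG ymed) :
    ∃ d : ℝ, HasDerivAt (fun τ : ℝ => ∑ y ∈ Ybad, policy φ (θt τ) y) d t ∧ d < 0 := by
  have : Nonempty Y := ⟨ybad⟩
  have hmin : ∀ y ∈ Ybad, ∀ z, rG y ≤ rG z := by grind
  have hhigh : ∀ y ∉ Ybad, expReward φ rG (θt t) < rG y := by grind
  exact bad_prob_decreasing_general horth.2 ⟨ybad, hybad⟩ ⟨ymed, hmb, hφ ymed⟩ (hflow t ht)
    (fun y hy => le_expReward φ (θt t) (hmin y hy)) hhigh
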